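/- Let k be a rational number and let n ≥ 1 be an integer. Define F(n,k) = (3n + 2k + 1) · (1/2)_n (1/2 + k)_n² / (1)_n³ · 4ⁿ and G(n,k) = −(1/2)_n (1/2 + k)_{n-1}² / (1)_{n-1}³ · 4ⁿ, where (a)_m = a(a+1)···(a+m−1) denotes the Pochhammer symbol over ℚ (with (a)_0 = 1). Then F(n, k−1) − F(n, k) = G(n+1, k) − G(n, k). -/

import Mathlib

/-!
With `n = m + 1` and `x = k - 1/2`, both sides are multiples of
`(1/2)_n (1/2 + k)_m² 4ⁿ / (n³ (1)_m³)`: on the left the shift `k ↦ k - 1` gives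
`(x)_n = x (x + 1)_m` and `(x + 1)_n = (x + 1)_m (x + n)`. After clearing the nonzero
denominators, the relation becomes the polynomial identity
`(3n + 2x) x² - (3n + 2x + 2) (x + n)² = n³ - (4n + 2) (x + n)²`.
-/

/-- `F(n,k) = (3n + 2k + 1) · (1/2)_n (1/2 + k)_n² / (1)_n³ · 4ⁿ`. -/
noncomputable def wzF1 (n : ℕ) (k : ℚ) : ℚ :=
  (3 * n + 2 * k + 1) *
    ((ascPochhammer ℚ n).eval (1 / 2) * ((ascPochhammer ℚ n).eval (1 / 2 + k)) ^ 2
      / ((ascPochhammer ℚ n).eval 1) ^ 3) * 4 ^ n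

/-- `G(n,k) = -(1/2)_n (1/2 + k)_{n-1}² / (1)_{n-1}³ · 4ⁿ`. -/
noncomputable def wzG1 (n : ℕ) (k : ℚ) : ℚ :=
  -((ascPochhammer ℚ n).eval (1 / 2) * ((ascPochhammer ℚ (n - 1)).eval (1 / 2 + k)) ^ 2
      / ((ascPochhammer ℚ (n - 1)).eval 1) ^ 3) * 4 ^ n

/-- Splitting off the first factor: `(a)_{m+1} = a (a + 1)_m`. -/
theorem ascPochhammer_eval_succ_left (m : ℕ) (a : ℚ) :
    (ascPochhammer ℚ (m + 1)).eval a = a * (ascPochhammer ℚ m).eval (a + 1) := by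
  simp [ascPochhammer_succ_left, Polynomial.eval_comp]

theorem wz_pair_relation_J1 (k : ℚ) (n : ℕ) (hn : 1 ≤ n) :
    wzF1 n (k - 1) - wzF1 n k = wzG1 (n + 1) k - wzG1 n k := by
  obtain ⟨m, rfl⟩ : ∃ m, n = m + 1 := ⟨n - 1, by omega⟩
  have hshift : (ascPochhammer ℚ (m + 1)).eval (1 / 2 + (k - 1))
      = (k - 1 / 2) * (ascPochhammer ℚ m).eval (1 / 2 + k) := by
    rw [ascPochhammer_eval_succ_left]
    ring_nf
  have hM : (ascPochhammer ℚ m).eval 1 ≠ 0 := (ascPochhammer_pos m 1 one_pos).ne'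
  have hn0 : (1 : ℚ) + m ≠ 0 := by positivity
  simp only [wzF1, wzG1, hshift, Nat.add_sub_cancel]
  -- Split the last factor off `(1/2)_{n+1}`, `(1/2 + k)_n` and `(1)_n`, where `n = m + 1`;
  -- `(1/2)_n` stays whole, as a factor common to all four terms.
  rw [ascPochhammer_succ_eval (m + 1) (1 / 2 : ℚ), ascPochhammer_succ_eval m (1 / 2 + k),
    ascPochhammer_succ_eval m (1 : ℚ)]
  generalize (ascPochhammer ℚ (m + 1)).eval (1 / 2 : ℚ) = A
  generalize (ascPochhammer ℚ m).eval (1 / 2 + k) = P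
  generalize (ascPochhammer ℚ m).eval (1 : ℚ) = M at hM ⊢
  push_cast
  field_simp
  ring
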